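/- arXiv:2209.12897 — 2 statements merged into one kernel-verified Lean document; each statement's English description precedes it below -/
import Mathlib

section
/- Let n ≥ 1, β ≥ 0, and let g : ℝⁿ → [0,∞) be β-log-concave. Define G(x,t) := g(x/t)^t for x ∈ ℝⁿ and t > 0. Then for all t, t' > 0, all λ ∈ [0,1], and all x, x' ∈ ℝⁿ, one has G(λx + (1−λ)x', λt + (1−λ)t') ≥ (exp(−βt) · G(x,t))^λ · (exp(−βt') · G(x',t'))^{1−λ}. -/
open Real

/-!
Since `log G(x, t) = t * log g(x / t)` is the perspective of `log g`, the claim is the joint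
concavity of a perspective, with an error. The point `(λx + (1 - λ)x') / (λt + (1 - λ)t')` is the
average of `x / t` and `x' / t'` with weights proportional to `λt` and `(1 - λ)t'`. Applying
`β`-log-concavity there and raising to the power `λt + (1 - λ)t'` turns the error `exp (-β)` into
`exp (-β t) ^ λ * exp (-β t') ^ (1 - λ)`.
-/

section ApproxLogConcave

variable {E : Type*} [AddCommMonoid E] [Module ℝ E] {β : ℝ} {g : E → ℝ}

/-- `β`-log-concavity of a nonnegative function: log-concavity up to the multiplicative error
`exp (-β)`. Since `0 ^ 0 = 1`, a zero of `g` carrying zero weight does not make the lower bound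
vanish. -/
structure IsApproxLogConcave (β : ℝ) (g : E → ℝ) : Prop where
  nonneg : ∀ x, 0 ≤ g x
  le_map_combo : ∀ x y : E, ∀ l : ℝ, l ∈ Set.Icc (0 : ℝ) 1 →
    exp (-β) * g x ^ l * g y ^ (1 - l) ≤ g (l • x + (1 - l) • y)

/-- The multiplicative perspective `G(x, t) = g(x / t) ^ t`, whose logarithm is the perspective
of `log g`. It is meaningful for `0 < t` only. -/
noncomputable def logPerspective (g : E → ℝ) (x : E) (t : ℝ) : ℝ :=
  g (t⁻¹ • x) ^ t

lemma exp_mul_logPerspective_rpow (hg : ∀ x, 0 ≤ g x) (β : ℝ) (x : E) (t l : ℝ) :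
    (exp (-β * t) * logPerspective g x t) ^ l =
      exp (-β * (l * t)) * g (t⁻¹ • x) ^ (l * t) := by
  have hpow : 0 ≤ g (t⁻¹ • x) ^ t := rpow_nonneg (hg _) t
  rw [logPerspective, mul_rpow (exp_nonneg _) hpow, ← exp_mul, ← rpow_mul (hg _), mul_assoc,
    mul_comm t l]

lemma IsApproxLogConcave.exp_mul_rpow_mul_rpow_le (hg : IsApproxLogConcave β g) {a b : ℝ}
    (ha : 0 ≤ a) (hb : 0 ≤ b) (hab : 0 < a + b) (x y : E) :
    exp (-β * (a + b)) * g x ^ a * g y ^ b ≤ logPerspective g (a • x + b • y) (a + b) := by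
  have hx := hg.nonneg x
  have hy := hg.nonneg y
  have hweight : 1 - a / (a + b) = b / (a + b) := by
    rw [one_sub_div hab.ne', add_sub_cancel_left]
  have haverage : (a / (a + b)) • x + (b / (a + b)) • y = (a + b)⁻¹ • (a • x + b • y) := by
    simp only [smul_add, smul_smul, div_eq_inv_mul]
  have hconcave : exp (-β) * g x ^ (a / (a + b)) * g y ^ (b / (a + b)) ≤
      g ((a + b)⁻¹ • (a • x + b • y)) := by
    have h := hg.le_map_combo x y (a / (a + b))
      (unitInterval.div_mem ha hab.le (le_add_of_nonneg_right hb))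
    rwa [hweight, haverage] at h
  calc exp (-β * (a + b)) * g x ^ a * g y ^ b
      = (exp (-β) * g x ^ (a / (a + b)) * g y ^ (b / (a + b))) ^ (a + b) := by
        rw [mul_rpow (by positivity) (by positivity), mul_rpow (by positivity) (by positivity),
          ← exp_mul, ← rpow_mul hx, ← rpow_mul hy, div_mul_cancel₀ _ hab.ne',
          div_mul_cancel₀ _ hab.ne']
    _ ≤ logPerspective g (a • x + b • y) (a + b) :=
        rpow_le_rpow (by positivity) hconcave hab.le

theorem pointwise_G_ineq_general (hg : IsApproxLogConcave β g) {t t' : ℝ} (ht : 0 < t)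
    (ht' : 0 < t') {l m : ℝ} (hl : 0 ≤ l) (hm : 0 ≤ m) (hlm : 0 < l + m) (x x' : E) :
    (exp (-β * t) * logPerspective g x t) ^ l * (exp (-β * t') * logPerspective g x' t') ^ m ≤
      logPerspective g (l • x + m • x') (l * t + m * t') := by
  have htime : 0 < l * t + m * t' := by
    rcases hl.eq_or_lt with rfl | hl_pos
    · rw [zero_add] at hlm
      positivity
    · positivity
  calc (exp (-β * t) * logPerspective g x t) ^ l * (exp (-β * t') * logPerspective g x' t') ^ m
      = exp (-β * (l * t + m * t')) * g (t⁻¹ • x) ^ (l * t) * g (t'⁻¹ • x') ^ (m * t') := by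
        rw [exp_mul_logPerspective_rpow hg.nonneg, exp_mul_logPerspective_rpow hg.nonneg,
          mul_add, exp_add]
        ring
    _ ≤ logPerspective g ((l * t) • t⁻¹ • x + (m * t') • t'⁻¹ • x') (l * t + m * t') :=
        hg.exp_mul_rpow_mul_rpow_le (by positivity) (by positivity) htime _ _
    _ = logPerspective g (l • x + m • x') (l * t + m * t') := by
        rw [smul_smul, smul_smul, mul_inv_cancel_right₀ ht.ne', mul_inv_cancel_right₀ ht'.ne']

end ApproxLogConcave

/-- Pointwise Prékopa–Leindler-type inequality for `G(x,t) = g(x/t)^t` when `g` is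
`β`-log-concave. -/
theorem pointwise_G_ineq (n : ℕ) (hn : 1 ≤ n) (β : ℝ) (hβ : 0 ≤ β)
    (g : (Fin n → ℝ) → ℝ) (hg0 : ∀ x, 0 ≤ g x)
    (hlc : ∀ x y : Fin n → ℝ, ∀ l : ℝ, l ∈ Set.Icc (0:ℝ) 1 →
      Real.exp (-β) * g x ^ l * g y ^ (1 - l) ≤ g (l • x + (1 - l) • y))
    (G : (Fin n → ℝ) → ℝ → ℝ) (hG : ∀ x t, G x t = g (t⁻¹ • x) ^ t) :
    ∀ t t' : ℝ, 0 < t → 0 < t' → ∀ l : ℝ, l ∈ Set.Icc (0:ℝ) 1 →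
      ∀ x x' : Fin n → ℝ,
      (Real.exp (-β * t) * G x t) ^ l * (Real.exp (-β * t') * G x' t') ^ (1 - l)
        ≤ G (l • x + (1 - l) • x') (l * t + (1 - l) * t') := by
  obtain rfl : G = logPerspective g := funext₂ hG
  exact fun t t' ht ht' l hl x x' => pointwise_G_ineq_general ⟨hg0, hlc⟩ ht ht' hl.1
    (sub_nonneg.mpr hl.2) (by norm_num) x x'
end

section
/- Let n ≥ 1, β ≥ 0, and let g : ℝⁿ → [0,∞) be measurable and β-log-concave, and define G(x,t) := g(x/t)^t. Fix t, t' > 0 and λ ∈ (0,1), and assume x ↦ G(x,t) and x ↦ G(x,t') are integrable on ℝⁿ. Then ∫_{ℝⁿ} G(x, λt + (1−λ)t') dx ≥ ( ∫_{ℝⁿ} exp(−βt) G(x,t) dx )^λ · ( ∫_{ℝⁿ} exp(−βt') G(x,t') dx )^{1−λ}. -/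
open Real MeasureTheory

/-!
On the line, the Prékopa–Leindler inequality follows from the one-dimensional Brunn–Minkowski
inequality for superlevel sets, integrated over the levels. It passes to products of measures by
Fubini, and to linear images and multiples of measures, hence to every Haar measure on a
finite-dimensional space.

The functions `exp (-β t) G(·, t)`, `exp (-β t') G(·, t')` and `G(·, a t + b t')` satisfy its
hypothesis with weights `a` and `b`: apply `β`-log-concavity of `g` at `x / t` and `y / t'`, with
weights `a t / s` and `b t' / s` where `s = a t + b t'`, and raise the result to the power `s`.
-/

open scoped ENNReal Pointwise

section BrunnMinkowskiLine

variable {A B : Set ℝ}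

theorem volume_add_volume_le_volume_add_of_isCompact (hA : IsCompact A) (hB : IsCompact B)
    (hA₀ : A.Nonempty) (hB₀ : B.Nonempty) : volume A + volume B ≤ volume (A + B) := by
  obtain ⟨m, hmA, hm⟩ := hA.exists_isGreatest hA₀
  obtain ⟨p, hpB, hp⟩ := hB.exists_isLeast hB₀
  -- The translate `A + {p}` ends where `{m} + B` begins.
  have inter_subset : (A + {p}) ∩ ({m} + B) ⊆ {m + p} := by
    rw [Set.add_singleton, Set.singleton_add]
    rintro _ ⟨⟨x, hx, rfl⟩, y, hy, hxy⟩
    have hxm := hm hx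
    have hpy := hp hy
    simp only [Set.mem_singleton_iff] at hxy ⊢
    linarith
  have disjoint : AEDisjoint volume (A + {p}) ({m} + B) :=
    measure_mono_null inter_subset (measure_singleton _)
  have measurable : MeasurableSet ({m} + B) := (isCompact_singleton.add hB).measurableSet
  calc volume A + volume B = volume (A + {p}) + volume ({m} + B) := by
        simp only [Set.add_singleton, Set.singleton_add, Set.image_add_right, Set.image_add_left,
          measure_preimage_add_right, measure_preimage_add]
    _ = volume ((A + {p}) ∪ ({m} + B)) :=
        (measure_union₀ measurable.nullMeasurableSet disjoint).symm
    _ ≤ volume (A + B) := measure_mono <| Set.union_subset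
        (Set.add_subset_add_left (Set.singleton_subset_iff.2 hpB))
        (Set.add_subset_add_right (Set.singleton_subset_iff.2 hmA))

theorem volume_add_volume_le_volume_add (hA : MeasurableSet A) (hB : MeasurableSet B) (hA₀ : A.Nonempty) (hB₀ : B.Nonempty) : volume A + volume B ≤ volume (A + B) := by
  obtain ⟨x, hx⟩ := hA₀
  obtain ⟨y, hy⟩ := hB₀
  rw [hA.measure_eq_iSup_isCompact, hB.measure_eq_iSup_isCompact]
  simp_rw [iSup_and']
  refine ENNReal.biSup_add_biSup_le' ⟨∅, Set.empty_subset _, isCompact_empty⟩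
    ⟨∅, Set.empty_subset _, isCompact_empty⟩ fun K ⟨hKA, hK⟩ L ⟨hLB, hL⟩ ↦ ?_
  calc volume K + volume L ≤ volume (insert x K) + volume (insert y L) := by
        gcongr <;> exact Set.subset_insert _ _
    _ ≤ volume (insert x K + insert y L) := volume_add_volume_le_volume_add_of_isCompact
        (hK.insert x) (hL.insert y) (Set.insert_nonempty _ _) (Set.insert_nonempty _ _)
    _ ≤ volume (A + B) := measure_mono <|
        Set.add_subset_add (Set.insert_subset hx hKA) (Set.insert_subset hy hLB)

theorem ofReal_abs_mul_volume_add_le_volume_smul_add_smul (hA : MeasurableSet A)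
    (hB : MeasurableSet B) (hA₀ : A.Nonempty) (hB₀ : B.Nonempty) (a b : ℝ) :
    ENNReal.ofReal |a| * volume A + ENNReal.ofReal |b| * volume B ≤ volume (a • A + b • B) := by
  simpa [Measure.addHaar_smul] using volume_add_volume_le_volume_add (hA.const_smul₀ a)
    (hB.const_smul₀ b) hA₀.smul_set hB₀.smul_set

end BrunnMinkowskiLine

theorem ennreal_geom_mean_le_arith_mean_weighted {a b : ℝ} (ha : 0 < a) (hb : 0 < b)
    (hab : a + b = 1) (p q : ℝ≥0∞) :
    p ^ a * q ^ b ≤ ENNReal.ofReal a * p + ENNReal.ofReal b * q := by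
  have conj : a⁻¹.HolderConjugate b⁻¹ := Real.holderConjugate_iff.2
    ⟨(one_lt_inv₀ ha).2 (by linarith), by rw [inv_inv, inv_inv, hab]⟩
  calc p ^ a * q ^ b ≤ (p ^ a) ^ a⁻¹ / ENNReal.ofReal a⁻¹ + (q ^ b) ^ b⁻¹ / ENNReal.ofReal b⁻¹ :=
        ENNReal.young_inequality _ _ conj
    _ = ENNReal.ofReal a * p + ENNReal.ofReal b * q := by
        rw [ENNReal.rpow_rpow_inv ha.ne', ENNReal.rpow_rpow_inv hb.ne',
          ENNReal.ofReal_inv_of_pos ha, ENNReal.ofReal_inv_of_pos hb, div_eq_mul_inv,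
          div_eq_mul_inv, inv_inv, inv_inv, mul_comm p, mul_comm q]

theorem lintegral_eq_lintegral_meas_ofReal_lt {α : Type*} [MeasurableSpace α] (μ : Measure α)
    {f : α → ℝ≥0∞} (hf : Measurable f) (hf_top : ∀ x, f x ≠ ∞) :
    ∫⁻ x, f x ∂μ = ∫⁻ r in Set.Ioi (0 : ℝ), μ {x | ENNReal.ofReal r < f x} := by
  calc ∫⁻ x, f x ∂μ = ∫⁻ x, ENNReal.ofReal (f x).toReal ∂μ := by
        simp only [ENNReal.ofReal_toReal (hf_top _)]
    _ = ∫⁻ r in Set.Ioi (0 : ℝ), μ {x | r < (f x).toReal} := lintegral_eq_lintegral_meas_lt μ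
        (.of_forall fun _ ↦ ENNReal.toReal_nonneg) hf.ennreal_toReal.aemeasurable
    _ = ∫⁻ r in Set.Ioi (0 : ℝ), μ {x | ENNReal.ofReal r < f x} :=
        setLIntegral_congr_fun measurableSet_Ioi fun r hr ↦ by
          simp only [ENNReal.ofReal_lt_iff_lt_toReal (le_of_lt hr) (hf_top _)]

theorem lintegral_eq_iSup_lintegral_min_natCast {α : Type*} [MeasurableSpace α] (μ : Measure α)
    {f : α → ℝ≥0∞} (hf : Measurable f) :
    ∫⁻ x, f x ∂μ = ⨆ n : ℕ, ∫⁻ x, min (f x) n ∂μ := by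
  rw [← lintegral_iSup (fun n ↦ hf.min measurable_const)
    fun m n hmn x ↦ min_le_min_left _ (Nat.cast_le.2 hmn)]
  simp_rw [← inf_iSup_eq, ENNReal.iSup_natCast, inf_top_eq]

theorem smul_superlevel_add_smul_superlevel_subset {E : Type*} [AddCommGroup E] [Module ℝ E]
    {a b : ℝ} (ha : 0 < a) (hb : 0 < b) (hab : a + b = 1) {f g h : E → ℝ≥0∞}
    (hfgh : ∀ x y, f x ^ a * g y ^ b ≤ h (a • x + b • y)) (c : ℝ≥0∞) :
    a • {x | c < f x} + b • {x | c < g x} ⊆ {x | c < h x} := by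
  rintro _ ⟨_, ⟨x, hx, rfl⟩, _, ⟨y, hy, rfl⟩, rfl⟩
  calc c = c ^ a * c ^ b := by
        rw [← ENNReal.rpow_add_of_nonneg _ _ ha.le hb.le, hab, ENNReal.rpow_one]
    _ < f x ^ a * g y ^ b :=
        ENNReal.mul_lt_mul (ENNReal.rpow_lt_rpow hx ha) (ENNReal.rpow_lt_rpow hy hb)
    _ ≤ h (a • x + b • y) := hfgh x y

section PrekopaLeindlerLine

variable {a b : ℝ} {f g h : ℝ → ℝ≥0∞}

theorem ofReal_mul_volume_superlevel_add_le (ha : 0 < a) (hb : 0 < b) (hab : a + b = 1)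
    (hf : Measurable f) (hg : Measurable g)
    (hfgh : ∀ x y, f x ^ a * g y ^ b ≤ h (a • x + b • y)) {c : ℝ≥0∞}
    (hcf : c < ⨆ x, f x) (hcg : c < ⨆ x, g x) :
    ENNReal.ofReal a * volume {x | c < f x} + ENNReal.ofReal b * volume {x | c < g x}
      ≤ volume {x | c < h x} := by
  obtain ⟨x, hx⟩ := lt_iSup_iff.1 hcf
  obtain ⟨y, hy⟩ := lt_iSup_iff.1 hcg
  have brunnMinkowski := ofReal_abs_mul_volume_add_le_volume_smul_add_smul
    (measurableSet_lt measurable_const hf) (measurableSet_lt measurable_const hg)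
    ⟨x, hx⟩ ⟨y, hy⟩ a b
  rw [abs_of_pos ha, abs_of_pos hb] at brunnMinkowski
  exact brunnMinkowski.trans <| measure_mono <|
    smul_superlevel_add_smul_superlevel_subset ha hb hab hfgh c

theorem prekopaLeindler_line_of_iSup_eq_one (ha : 0 < a) (hb : 0 < b) (hab : a + b = 1)
    (hf : Measurable f) (hg : Measurable g) (hh : Measurable h)
    (hf_sup : ⨆ x, f x = 1) (hg_sup : ⨆ x, g x = 1)
    (hfgh : ∀ x y, f x ^ a * g y ^ b ≤ h (a • x + b • y)) :
    (∫⁻ x, f x) ^ a * (∫⁻ x, g x) ^ b ≤ ∫⁻ x, h x := by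
  have hf_le (x) : f x ≤ 1 := hf_sup ▸ le_iSup f x
  have hg_le (x) : g x ≤ 1 := hg_sup ▸ le_iSup g x
  have level_le (r : ℝ) :
      ENNReal.ofReal a * volume {x | ENNReal.ofReal r < f x} +
        ENNReal.ofReal b * volume {x | ENNReal.ofReal r < g x} ≤
      volume {x | ENNReal.ofReal r < min (h x) 1} := by
    rcases lt_or_ge (ENNReal.ofReal r) 1 with hr | hr
    · simp only [lt_min_iff, hr, and_true]
      exact ofReal_mul_volume_superlevel_add_le ha hb hab hf hg hfgh (hf_sup ▸ hr) (hg_sup ▸ hr)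
    · simp only [((hf_le _).trans hr).not_gt, ((hg_le _).trans hr).not_gt, Set.ofPred_false,
        measure_empty, mul_zero, add_zero, zero_le]
  calc (∫⁻ x, f x) ^ a * (∫⁻ x, g x) ^ b
      ≤ ENNReal.ofReal a * (∫⁻ x, f x) + ENNReal.ofReal b * ∫⁻ x, g x :=
        ennreal_geom_mean_le_arith_mean_weighted ha hb hab _ _
    _ ≤ ∫⁻ r in Set.Ioi (0 : ℝ), (ENNReal.ofReal a * volume {x | ENNReal.ofReal r < f x} +
          ENNReal.ofReal b * volume {x | ENNReal.ofReal r < g x}) := by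
        rw [lintegral_eq_lintegral_meas_ofReal_lt _ hf fun x ↦ ((hf_le x).trans_lt (by simp)).ne,
          lintegral_eq_lintegral_meas_ofReal_lt _ hg fun x ↦ ((hg_le x).trans_lt (by simp)).ne,
          ← lintegral_const_mul' _ _ ENNReal.ofReal_ne_top,
          ← lintegral_const_mul' _ _ ENNReal.ofReal_ne_top]
        exact le_lintegral_add _ _
    _ ≤ ∫⁻ r in Set.Ioi (0 : ℝ), volume {x | ENNReal.ofReal r < min (h x) 1} :=
        lintegral_mono level_le
    _ = ∫⁻ x, min (h x) 1 := (lintegral_eq_lintegral_meas_ofReal_lt _ (hh.min measurable_const)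
        fun x ↦ ((min_le_right _ _).trans_lt ENNReal.one_lt_top).ne).symm
    _ ≤ ∫⁻ x, h x := lintegral_mono fun x ↦ min_le_left _ _

theorem prekopaLeindler_line_of_iSup_ne_top (ha : 0 < a) (hb : 0 < b) (hab : a + b = 1)
    (hf : Measurable f) (hg : Measurable g) (hh : Measurable h)
    (hf_sup : ⨆ x, f x ≠ ∞) (hg_sup : ⨆ x, g x ≠ ∞)
    (hfgh : ∀ x y, f x ^ a * g y ^ b ≤ h (a • x + b • y)) :
    (∫⁻ x, f x) ^ a * (∫⁻ x, g x) ^ b ≤ ∫⁻ x, h x := by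
  set F := ⨆ x, f x with hF
  set G := ⨆ x, g x with hG
  rcases eq_or_ne F 0 with hF₀ | hF₀
  · have hf₀ : ∀ x, f x = 0 := by simpa only [hF, ENNReal.iSup_eq_zero] using hF₀
    simp [hf₀, ha]
  rcases eq_or_ne G 0 with hG₀ | hG₀
  · have hg₀ : ∀ x, g x = 0 := by simpa only [hG, ENNReal.iSup_eq_zero] using hG₀
    simp [hg₀, hb]
  have mul_scaled (u v : ℝ≥0∞) :
      (F⁻¹ * u) ^ a * (G⁻¹ * v) ^ b = F⁻¹ ^ a * G⁻¹ ^ b * (u ^ a * v ^ b) := by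
    rw [ENNReal.mul_rpow_of_nonneg _ _ ha.le, ENNReal.mul_rpow_of_nonneg _ _ hb.le,
      mul_mul_mul_comm]
  have scaled := prekopaLeindler_line_of_iSup_eq_one (f := fun x ↦ F⁻¹ * f x)
    (g := fun x ↦ G⁻¹ * g x) (h := fun x ↦ F⁻¹ ^ a * G⁻¹ ^ b * h x) ha hb hab
    (hf.const_mul _) (hg.const_mul _) (hh.const_mul _)
    (by rw [← ENNReal.mul_iSup, ENNReal.inv_mul_cancel hF₀ hf_sup])
    (by rw [← ENNReal.mul_iSup, ENNReal.inv_mul_cancel hG₀ hg_sup])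
    fun x y ↦ by rw [mul_scaled]; gcongr; exact hfgh x y
  rw [lintegral_const_mul _ hf, lintegral_const_mul _ hg, lintegral_const_mul _ hh,
    mul_scaled] at scaled
  have factor_ne_zero : F⁻¹ ^ a * G⁻¹ ^ b ≠ 0 := by
    simp [hf_sup, hg_sup, hF₀, hG₀, ha.not_gt, hb.not_gt]
  have factor_ne_top : F⁻¹ ^ a * G⁻¹ ^ b ≠ ∞ := ENNReal.mul_ne_top
    (ENNReal.rpow_ne_top_of_nonneg ha.le (ENNReal.inv_ne_top.2 hF₀))
    (ENNReal.rpow_ne_top_of_nonneg hb.le (ENNReal.inv_ne_top.2 hG₀))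
  exact (ENNReal.mul_le_mul_iff_right factor_ne_zero factor_ne_top).1 scaled

theorem prekopaLeindler_line (ha : 0 < a) (hb : 0 < b) (hab : a + b = 1)
    (hf : Measurable f) (hg : Measurable g) (hh : Measurable h)
    (hfgh : ∀ x y, f x ^ a * g y ^ b ≤ h (a • x + b • y)) :
    (∫⁻ x, f x) ^ a * (∫⁻ x, g x) ^ b ≤ ∫⁻ x, h x := by
  have rpow_iSup {c : ℝ} (hc : 0 < c) (u : ℕ → ℝ≥0∞) : (⨆ n, u n) ^ c = ⨆ n, u n ^ c :=
    (ENNReal.orderIsoRpow c hc).map_iSup u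
  have iSup_min_ne_top (u : ℝ → ℝ≥0∞) (n : ℕ) : ⨆ x, min (u x) n ≠ ∞ :=
    ne_top_of_le_ne_top (ENNReal.natCast_ne_top n) (iSup_le fun _ ↦ min_le_right _ _)
  rw [lintegral_eq_iSup_lintegral_min_natCast _ hf, lintegral_eq_iSup_lintegral_min_natCast _ hg,
    rpow_iSup ha, rpow_iSup hb]
  simp_rw [ENNReal.iSup_mul, ENNReal.mul_iSup]
  refine iSup₂_le fun m n ↦ prekopaLeindler_line_of_iSup_ne_top ha hb hab
    (hf.min measurable_const) (hg.min measurable_const) hh (iSup_min_ne_top f m)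
    (iSup_min_ne_top g n) fun x y ↦ le_trans ?_ (hfgh x y)
  gcongr <;> exact min_le_left _ _

end PrekopaLeindlerLine

/-- `μ` satisfies the Prékopa–Leindler inequality with weights `a` and `b`. Taking the measure as
the subject lets the inequality be transported between spaces. -/
def IsPrekopaLeindler {E : Type*} [AddCommGroup E] [Module ℝ E] [MeasurableSpace E] (a b : ℝ)
    (μ : Measure E) : Prop :=
  ∀ ⦃f g h : E → ℝ≥0∞⦄, Measurable f → Measurable g → Measurable h →
    (∀ x y, f x ^ a * g y ^ b ≤ h (a • x + b • y)) →
    (∫⁻ x, f x ∂μ) ^ a * (∫⁻ x, g x ∂μ) ^ b ≤ ∫⁻ x, h x ∂μ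

namespace IsPrekopaLeindler

section Algebraic

variable {E F : Type*} [AddCommGroup E] [Module ℝ E] [MeasurableSpace E]
  [AddCommGroup F] [Module ℝ F] [MeasurableSpace F] {a b : ℝ} {μ : Measure E} {ν : Measure F}

theorem dirac (hab : a + b = 1) (x : E) : IsPrekopaLeindler a b (Measure.dirac x) := by
  intro f g h hf hg hh hfgh
  rw [lintegral_dirac' x hf, lintegral_dirac' x hg, lintegral_dirac' x hh]
  simpa only [← add_smul, hab, one_smul] using hfgh x x

theorem smul (hμ : IsPrekopaLeindler a b μ) (ha : 0 ≤ a) (hb : 0 ≤ b) (hab : a + b = 1)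
    (c : ℝ≥0∞) : IsPrekopaLeindler a b (c • μ) := by
  intro f g h hf hg hh hfgh
  simp only [lintegral_smul_measure, smul_eq_mul]
  rw [ENNReal.mul_rpow_of_nonneg _ _ ha, ENNReal.mul_rpow_of_nonneg _ _ hb, mul_mul_mul_comm,
    ← ENNReal.rpow_add_of_nonneg _ _ ha hb, hab, ENNReal.rpow_one]
  gcongr
  exact hμ hf hg hh hfgh

theorem map (hμ : IsPrekopaLeindler a b μ) (L : E →ₗ[ℝ] F) (hL : Measurable L) :
    IsPrekopaLeindler a b (μ.map L) := by
  intro f g h hf hg hh hfgh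
  rw [lintegral_map hf hL, lintegral_map hg hL, lintegral_map hh hL]
  refine hμ (hf.comp hL) (hg.comp hL) (hh.comp hL) fun x y ↦ ?_
  simpa only [Function.comp_apply, map_add, map_smul] using hfgh (L x) (L y)

theorem prod [SFinite ν] (hμ : IsPrekopaLeindler a b μ) (hν : IsPrekopaLeindler a b ν) :
    IsPrekopaLeindler a b (μ.prod ν) := by
  intro f g h hf hg hh hfgh
  rw [lintegral_prod _ hf.aemeasurable, lintegral_prod _ hg.aemeasurable,
    lintegral_prod _ hh.aemeasurable]
  refine hμ hf.lintegral_prod_right' hg.lintegral_prod_right' hh.lintegral_prod_right'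
    fun x x' ↦ ?_
  exact hν (hf.comp measurable_prodMk_left) (hg.comp measurable_prodMk_left)
    (hh.comp measurable_prodMk_left) fun y y' ↦ hfgh (x, y) (x', y')

end Algebraic

section Haar

variable {E F : Type*} [NormedAddCommGroup E] [NormedSpace ℝ E] [MeasurableSpace E] [BorelSpace E]
  [NormedAddCommGroup F] [NormedSpace ℝ F] [MeasurableSpace F] [BorelSpace F]
  [FiniteDimensional ℝ F] {a b : ℝ}

theorem of_continuousLinearEquiv (ha : 0 ≤ a) (hb : 0 ≤ b) (hab : a + b = 1) {μ : Measure E}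
    [μ.IsAddHaarMeasure] (hμ : IsPrekopaLeindler a b μ) (e : E ≃L[ℝ] F) (ν : Measure F)
    [ν.IsAddHaarMeasure] : IsPrekopaLeindler a b ν := by
  have hmap : IsPrekopaLeindler a b (μ.map e) :=
    hμ.map (e : E →ₗ[ℝ] F) e.continuous.measurable
  rw [Measure.isAddLeftInvariant_eq_smul ν (μ.map e)]
  exact hmap.smul ha hb hab _

theorem volume_pi_fin (ha : 0 < a) (hb : 0 < b) (hab : a + b = 1) (n : ℕ) :
    IsPrekopaLeindler a b (volume : Measure (Fin n → ℝ)) := by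
  induction n with
  | zero =>
    rw [Measure.volume_pi_eq_dirac 0]
    exact dirac hab 0
  | succ n ih =>
    have line : IsPrekopaLeindler a b (volume : Measure ℝ) :=
      fun _ _ _ ↦ prekopaLeindler_line ha hb hab
    exact (line.prod ih).of_continuousLinearEquiv ha.le hb.le hab
      (Fin.consEquivL ℝ fun _ : Fin (n + 1) ↦ ℝ) volume

theorem of_isAddHaarMeasure (ha : 0 < a) (hb : 0 < b) (hab : a + b = 1) (μ : Measure F)
    [μ.IsAddHaarMeasure] : IsPrekopaLeindler a b μ :=
  (volume_pi_fin ha hb hab (Module.finrank ℝ F)).of_continuousLinearEquiv ha.le hb.le hab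
    (Module.finBasis ℝ F).equivFunL.symm μ

end Haar

end IsPrekopaLeindler

/-- `g` is `β`-log-concave: log-concave up to the factor `exp (-β)`. It is meant for nonnegative
`g`; nonnegativity is not part of the definition. -/
def IsBetaLogConcave {E : Type*} [AddCommGroup E] [Module ℝ E] (β : ℝ) (g : E → ℝ) : Prop :=
  ∀ ⦃x y : E⦄ ⦃a b : ℝ⦄, 0 ≤ a → 0 ≤ b → a + b = 1 →
    exp (-β) * g x ^ a * g y ^ b ≤ g (a • x + b • y)

/-- The function `G(x, t) = g(x / t) ^ t`. For positive `g` and `t`, its logarithm is the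
perspective of `log g`. -/
noncomputable def expPerspective {E : Type*} [AddCommGroup E] [Module ℝ E] (g : E → ℝ)
    (x : E) (t : ℝ) : ℝ :=
  g (t⁻¹ • x) ^ t

theorem expPerspective_nonneg {E : Type*} [AddCommGroup E] [Module ℝ E] {g : E → ℝ}
    (hg₀ : ∀ x, 0 ≤ g x) (x : E) (t : ℝ) : 0 ≤ expPerspective g x t :=
  rpow_nonneg (hg₀ _) t

theorem measurable_expPerspective {E : Type*} [AddCommGroup E] [Module ℝ E] [MeasurableSpace E]
    [MeasurableConstSMul ℝ E] {g : E → ℝ} (hg : Measurable g) (t : ℝ) :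
    Measurable fun x ↦ expPerspective g x t :=
  (hg.comp (measurable_const_smul t⁻¹)).pow_const t

theorem IsBetaLogConcave.expPerspective_mul_le {E : Type*} [AddCommGroup E] [Module ℝ E] {β : ℝ}
    {g : E → ℝ} (hlc : IsBetaLogConcave β g) (hg₀ : ∀ x, 0 ≤ g x) {t t' : ℝ} (ht : 0 < t)
    (ht' : 0 < t') {a b : ℝ} (ha : 0 < a) (hb : 0 < b) (x y : E) :
    (exp (-β * t) * expPerspective g x t) ^ a * (exp (-β * t') * expPerspective g y t') ^ b
      ≤ expPerspective g (a • x + b • y) (a * t + b * t') := by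
  set s := a * t + b * t' with hs
  have hs₀ : 0 < s := by positivity
  set p := g (t⁻¹ • x)
  set q := g (t'⁻¹ • y)
  have hp : 0 ≤ p := hg₀ _
  have hq : 0 ≤ q := hg₀ _
  have point_eq : (a * t / s) • t⁻¹ • x + (b * t' / s) • t'⁻¹ • y = s⁻¹ • (a • x + b • y) := by
    rw [smul_add, smul_smul, smul_smul, smul_smul, smul_smul]
    congr 2 <;> field_simp
  calc (exp (-β * t) * p ^ t) ^ a * (exp (-β * t') * q ^ t') ^ b
      = exp (-β * s) * p ^ (a * t) * q ^ (b * t') := by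
        rw [mul_rpow (by positivity) (by positivity), mul_rpow (by positivity) (by positivity),
          ← rpow_mul hp, ← rpow_mul hq, ← exp_mul, ← exp_mul, mul_mul_mul_comm, ← exp_add,
          ← mul_assoc, mul_comm t, mul_comm t', hs]
        ring_nf
    _ = (exp (-β) * p ^ (a * t / s) * q ^ (b * t' / s)) ^ s := by
        rw [mul_rpow (by positivity) (by positivity), mul_rpow (by positivity) (by positivity),
          ← rpow_mul hp, ← rpow_mul hq, ← exp_mul, div_mul_cancel₀ _ hs₀.ne',
          div_mul_cancel₀ _ hs₀.ne']
    _ ≤ g ((a * t / s) • t⁻¹ • x + (b * t' / s) • t'⁻¹ • y) ^ s := by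
        gcongr
        exact hlc (by positivity) (by positivity) (by rw [← add_div, ← hs, div_self hs₀.ne'])
    _ = expPerspective g (a • x + b • y) s := by rw [point_eq, expPerspective]

theorem integral_G_ineq_general {E : Type*} [NormedAddCommGroup E] [NormedSpace ℝ E]
    [FiniteDimensional ℝ E] [MeasurableSpace E] [BorelSpace E] (μ : Measure E)
    [μ.IsAddHaarMeasure] {β : ℝ} {g : E → ℝ} (hg : Measurable g) (hg₀ : ∀ x, 0 ≤ g x)
    (hlc : IsBetaLogConcave β g) {t t' : ℝ} (ht : 0 < t) (ht' : 0 < t') {a b : ℝ} (ha : 0 < a)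
    (hb : 0 < b) (hab : a + b = 1) :
    (∫⁻ x, ENNReal.ofReal (exp (-β * t) * expPerspective g x t) ∂μ) ^ a *
        (∫⁻ x, ENNReal.ofReal (exp (-β * t') * expPerspective g x t') ∂μ) ^ b
      ≤ ∫⁻ x, ENNReal.ofReal (expPerspective g x (a * t + b * t')) ∂μ := by
  have scaled_nonneg (x : E) (s : ℝ) : 0 ≤ exp (-β * s) * expPerspective g x s :=
    mul_nonneg (exp_pos _).le (expPerspective_nonneg hg₀ x s)
  refine IsPrekopaLeindler.of_isAddHaarMeasure ha hb hab μ
    ((measurable_expPerspective hg t).const_mul _).ennreal_ofReal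
    ((measurable_expPerspective hg t').const_mul _).ennreal_ofReal
    (measurable_expPerspective hg _).ennreal_ofReal fun x y ↦ ?_
  rw [ENNReal.ofReal_rpow_of_nonneg (scaled_nonneg x t) ha.le,
    ENNReal.ofReal_rpow_of_nonneg (scaled_nonneg y t') hb.le,
    ← ENNReal.ofReal_mul (rpow_nonneg (scaled_nonneg x t) a)]
  exact ENNReal.ofReal_le_ofReal (hlc.expPerspective_mul_le hg₀ ht ht' ha hb x y)

/-- Integral Prékopa–Leindler-type inequality for `G(x,t) = g(x/t)^t` when `g` is
measurable and `β`-log-concave. -/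
theorem integral_G_ineq (n : ℕ) (hn : 1 ≤ n) (β : ℝ) (hβ : 0 ≤ β)
    (g : (Fin n → ℝ) → ℝ) (hgm : Measurable g) (hg0 : ∀ x, 0 ≤ g x)
    (hlc : ∀ x y : Fin n → ℝ, ∀ l : ℝ, l ∈ Set.Icc (0:ℝ) 1 →
      Real.exp (-β) * g x ^ l * g y ^ (1 - l) ≤ g (l • x + (1 - l) • y))
    (G : (Fin n → ℝ) → ℝ → ℝ) (hG : ∀ x t, G x t = g (t⁻¹ • x) ^ t)
    (t t' : ℝ) (ht : 0 < t) (ht' : 0 < t')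
    (l : ℝ) (hl : l ∈ Set.Ioo (0:ℝ) 1)
    (hint : Integrable (fun x => G x t))
    (hint' : Integrable (fun x => G x t')) :
    (∫⁻ x, ENNReal.ofReal (Real.exp (-β * t) * G x t)) ^ l *
      (∫⁻ x, ENNReal.ofReal (Real.exp (-β * t') * G x t')) ^ (1 - l)
      ≤ ∫⁻ x, ENNReal.ofReal (G x (l * t + (1 - l) * t')) := by
  obtain rfl : G = expPerspective g := funext₂ hG
  exact integral_G_ineq_general volume hgm hg0
    (fun x y a b ha hb hab ↦ eq_sub_of_add_eq' hab ▸ hlc x y a ⟨ha, by linarith⟩)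
    ht ht' hl.1 (sub_pos.2 hl.2) (add_sub_cancel l 1)
end
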